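/- Let x̲ = min_{1≤k≤K} x_k, x̄ = max_{1≤k≤K} x_k, y̲ = min_{1≤k≤K} y_k, ȳ = max_{1≤k≤K} y_k, and suppose λ_k ≥ 0 for all k. Then for every x, y ∈ ℝ and every p ≥ 0, ψ(clamp(x, x̲, x̄), clamp(y, y̲, ȳ), p) ≥ ψ(x, y, p), where clamp(t, a, b) = max(a, min(t, b)). Consequently, any maximizer of ψ over location can be taken inside the box [x̲, x̄] × [y̲, ȳ]. -/

import Mathlib

/-- Achievable rate of user `k` when the UAV is at horizontal location `(x, y)`
at altitude `H`, transmitting with power `p`, with reference SNR `γ₀`. -/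
noncomputable def rate (γ₀ H : ℝ) {K : ℕ} (xs ys : Fin K → ℝ) (k : Fin K)
    (x y p : ℝ) : ℝ :=
  Real.logb 2 (1 + γ₀ * p / ((x - xs k) ^ 2 + (y - ys k) ^ 2 + H ^ 2))

/-- The weighted Lagrangian objective `ψ(x, y, p) = ∑ λ_k R_k(x, y, p) − μ p`. -/
noncomputable def psi (γ₀ H : ℝ) {K : ℕ} (xs ys : Fin K → ℝ)
    (lam : Fin K → ℝ) (μ : ℝ) (x y p : ℝ) : ℝ :=
  (∑ k, lam k * rate γ₀ H xs ys k x y p) - μ * p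

/-- `clamp t a b = max(a, min(t, b))`. -/
noncomputable def clamp (t a b : ℝ) : ℝ := max a (min t b)

/-- Clamping to an interval does not increase the squared distance to a point of it. -/
theorem clamp_sub_sq_le {a b c : ℝ} (t : ℝ) (hac : a ≤ c) (hcb : c ≤ b) :
    (clamp t a b - c) ^ 2 ≤ (t - c) ^ 2 := by
  unfold clamp
  rcases le_total t b with htb | hbt
  · rw [min_eq_left htb]
    rcases le_total a t with hat | hta
    · rw [max_eq_right hat]
    · rw [max_eq_left hta]
      nlinarith
  · rw [min_eq_right hbt, max_eq_right (hac.trans hcb)]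
    nlinarith

/-- The rate does not decrease when the UAV moves closer to the user in each coordinate. -/
theorem rate_le_rate {γ₀ H : ℝ} (hγ : 0 ≤ γ₀) (hH : 0 < H) {K : ℕ} {xs ys : Fin K → ℝ}
    {k : Fin K} {x y x' y' p : ℝ} (hp : 0 ≤ p) (hx : (x' - xs k) ^ 2 ≤ (x - xs k) ^ 2)
    (hy : (y' - ys k) ^ 2 ≤ (y - ys k) ^ 2) :
    rate γ₀ H xs ys k x y p ≤ rate γ₀ H xs ys k x' y' p := by
  unfold rate
  apply Real.logb_le_logb_of_le one_lt_two (by positivity)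
  gcongr

/-- Clamping the UAV location into the bounding box of the users can only
increase `ψ`: any maximizer of `ψ` over location can be taken inside the box. -/
theorem stmt2 (K : ℕ) (hK : 0 < K) (xs ys : Fin K → ℝ) (γ₀ H : ℝ)
    (hγ : 0 < γ₀) (hH : 0 < H) (lam : Fin K → ℝ) (hlam : ∀ k, 0 ≤ lam k)
    (μ : ℝ) (x y p : ℝ) (hp : 0 ≤ p) :
    psi γ₀ H xs ys lam μ
        (clamp x (Finset.univ.inf' ⟨⟨0, hK⟩, Finset.mem_univ _⟩ xs)
                 (Finset.univ.sup' ⟨⟨0, hK⟩, Finset.mem_univ _⟩ xs))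
        (clamp y (Finset.univ.inf' ⟨⟨0, hK⟩, Finset.mem_univ _⟩ ys)
                 (Finset.univ.sup' ⟨⟨0, hK⟩, Finset.mem_univ _⟩ ys)) p
      ≥ psi γ₀ H xs ys lam μ x y p := by
  unfold psi
  refine sub_le_sub_right (Finset.sum_le_sum fun k _ => ?_) _
  refine mul_le_mul_of_nonneg_left (rate_le_rate hγ.le hH hp ?_ ?_) (hlam k) <;>
    exact clamp_sub_sq_le _ (Finset.inf'_le _ (Finset.mem_univ k))
      (Finset.le_sup' _ (Finset.mem_univ k))
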